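/- Let n = Δ·s with Δ, s positive integers, 0 ≤ t_d ≤ Δ−1, P_x > 0, γ > 0, σ_x² = P_x/n, and consider the static channel (h_t = 1). For equidistant-sampling allocations, the error equals ērr(ā) = Σ_{r=0}^{s−1} (P_x/s)/(1 + γ σ_x² ā_r) for ā ∈ ℝ^s with nonnegative entries, and ērr is Schur-convex: if ā ≺ b̄ with ā, b̄ entrywise nonnegative then ērr(ā) ≤ ērr(b̄). Consequently, any equidistant allocation ā* that satisfies the induced energy causality constraints and is majorized by every allocation satisfying them minimizes ērr among all such allocations (the most majorized, i.e. most balanced, feasible power allocation over the s transmitted samples is optimal). -/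

import Mathlib

/-- `a` is majorized by `b` (written `a ≺ b`): for every `k`, the sum of the `k`
largest entries of `a` is at most the sum of the `k` largest entries of `b`,
and the total sums agree. -/
def Majorizes {s : ℕ} (a b : Fin s → ℝ) : Prop :=
  (∀ k : ℕ, k < s → ∀ t : Finset (Fin s), t.card = k →
      ∃ t' : Finset (Fin s), t'.card = k ∧ ∑ i ∈ t, a i ≤ ∑ i ∈ t', b i) ∧
  (∑ i, a i = ∑ i, b i)

/-- Induced energy causality feasibility for the `s` transmitted samples, with
induced energy arrivals `Ebar`: nonnegative powers, cumulative consumed energy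
never exceeds cumulative harvested energy, and all energy is used. -/
def FeasibleBar {s : ℕ} (σx2 : ℝ) (Ebar : Fin s → ℝ) (abar : Fin s → ℝ) : Prop :=
  (∀ r, 0 ≤ abar r) ∧
  (∀ r : Fin s, ∑ l ∈ Finset.Iic r, abar l * σx2 ≤ ∑ l ∈ Finset.Iic r, Ebar l) ∧
  (∑ l, abar l * σx2 = ∑ l, Ebar l)

/-!
If `a` is majorized by `b`, then `a` lies in the convex hull of the rearrangements of `b` (Rado).
Indeed, for a linear functional `x ↦ ∑ i, c i * x i`, sort `c` and `b` decreasingly: summation by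
parts turns the partial-sum inequalities of majorization into `∑ i, c i * a i ≤ ∑ i, c i * b (σ i)`
for some permutation `σ`, so no hyperplane separates `a` from the hull. By the maximum principle a
convex permutation-invariant function is therefore Schur-convex. The sampling error is such a
function, because `x ↦ C / (1 + g * x)` is convex on `[0, ∞)`.
-/

open Finset

section AntitoneWeights

variable {ι R : Type*} [LinearOrder ι] [CommRing R] [LinearOrder R] [IsStrictOrderedRing R]

-- An arbitrary lower bound `m` lets the induction hypothesis be used with `m` the newest weight.
theorem mul_sum_le_sum_mul_of_antitoneOn {s : Finset ι} {c d : ι → R} {m : R}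
    (hc : AntitoneOn c s) (hm : ∀ i ∈ s, m ≤ c i)
    (hd : ∀ k ∈ s, 0 ≤ ∑ i ∈ s with i < k, d i) (hsum : 0 ≤ ∑ i ∈ s, d i) :
    m * ∑ i ∈ s, d i ≤ ∑ i ∈ s, c i * d i := by
  induction s using Finset.induction_on_max generalizing m with
  | empty => simp
  | insert a s ha ih =>
    have has : a ∉ s := fun h => (ha a h).false
    have hfilter_max : {i ∈ insert a s | i < a} = s := by
      rw [filter_insert, if_neg (lt_irrefl a), filter_true_of_mem ha]
    have hfilter : ∀ k ∈ s, {i ∈ insert a s | i < k} = {i ∈ s | i < k} := fun k hk => by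
      rw [filter_insert, if_neg (ha k hk).not_gt]
    have hprefix : c a * ∑ i ∈ s, d i ≤ ∑ i ∈ s, c i * d i :=
      ih (hc.mono (by simp)) (fun i hi => hc (by simp [hi]) (by simp) (ha i hi).le)
        (fun k hk => hfilter k hk ▸ hd k (mem_insert_of_mem hk))
        (hfilter_max ▸ hd a (mem_insert_self a s))
    calc m * ∑ i ∈ insert a s, d i
        ≤ c a * ∑ i ∈ insert a s, d i :=
          mul_le_mul_of_nonneg_right (hm a (mem_insert_self a s)) hsum
      _ = c a * d a + c a * ∑ i ∈ s, d i := by rw [sum_insert has, mul_add]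
      _ ≤ c a * d a + ∑ i ∈ s, c i * d i := by gcongr
      _ = ∑ i ∈ insert a s, c i * d i := by rw [sum_insert has]

theorem sum_mul_le_sum_mul_of_antitone [Fintype ι] [LocallyFiniteOrderBot ι] {c x y : ι → R}
    (hc : Antitone c) (hIio : ∀ k, ∑ i ∈ Iio k, x i ≤ ∑ i ∈ Iio k, y i)
    (hsum : ∑ i, x i = ∑ i, y i) : ∑ i, c i * x i ≤ ∑ i, c i * y i := by
  obtain ⟨m, hm⟩ := (Set.finite_range c).bddBelow
  have hzero : ∑ i, (y i - x i) = 0 := by rw [sum_sub_distrib, hsum, sub_self]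
  have hnonneg : m * ∑ i, (y i - x i) ≤ ∑ i, c i * (y i - x i) := by
    refine mul_sum_le_sum_mul_of_antitoneOn (hc.antitoneOn _) (fun i _ => hm ⟨i, rfl⟩)
      (fun k _ => ?_) hzero.ge
    rw [filter_gt_eq_Iio, sum_sub_distrib]
    exact sub_nonneg.mpr (hIio k)
  simpa only [hzero, mul_zero, mul_sub, sum_sub_distrib, sub_nonneg] using hnonneg

end AntitoneWeights

theorem sum_le_sum_of_card_eq_of_threshold {ι M : Type*} [AddCommMonoid M] [PartialOrder M]
    [IsOrderedCancelAddMonoid M] {t u : Finset ι} {f : ι → M} {m : M}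
    (hcard : #t = #u) (hu : ∀ i ∈ u, m ≤ f i) (hu' : ∀ i ∉ u, f i ≤ m) :
    ∑ i ∈ t, f i ≤ ∑ i ∈ u, f i := by
  classical
  rw [← sum_sdiff_le_sum_sdiff]
  calc ∑ i ∈ t \ u, f i
      ≤ #(t \ u) • m := sum_le_card_nsmul _ _ _ fun i hi => hu' i (mem_sdiff.mp hi).2
    _ = #(u \ t) • m := by rw [card_sdiff_comm hcard]
    _ ≤ ∑ i ∈ u \ t, f i := card_nsmul_le_sum _ _ _ fun i hi => hu i (mem_sdiff.mp hi).1

theorem exists_perm_antitone_comp {α : Type*} [LinearOrder α] {n : ℕ} (a : Fin n → α) :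
    ∃ σ : Equiv.Perm (Fin n), Antitone (a ∘ σ) :=
  ⟨Tuple.sort (OrderDual.toDual ∘ a), Tuple.monotone_sort (OrderDual.toDual ∘ a)⟩

namespace Majorizes

variable {s : ℕ} {a b : Fin s → ℝ}

theorem comp_perm (h : Majorizes a b) (σ τ : Equiv.Perm (Fin s)) :
    Majorizes (a ∘ σ) (b ∘ τ) := by
  refine ⟨fun k hk t ht => ?_, ?_⟩
  · obtain ⟨t', ht', hle⟩ := h.1 k hk (t.map σ.toEmbedding) (by simpa using ht)
    refine ⟨t'.map τ.symm.toEmbedding, by simpa using ht', ?_⟩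
    simpa [sum_map] using hle
  · simpa only [Function.comp_apply, Equiv.sum_comp] using h.2

theorem sum_Iio_le_sum_Iio (h : Majorizes a b) (hb : Antitone b) (k : Fin s) :
    ∑ i ∈ Iio k, a i ≤ ∑ i ∈ Iio k, b i := by
  obtain ⟨t, ht, hle⟩ := h.1 k k.isLt (Iio k) (Fin.card_Iio k)
  refine hle.trans (sum_le_sum_of_card_eq_of_threshold (m := b k) (by rw [ht, Fin.card_Iio])
    (fun i hi => hb (mem_Iio.mp hi).le) fun i hi => hb ?_)
  simpa only [mem_Iio, not_lt] using hi

theorem exists_perm_sum_mul_le (h : Majorizes a b) (c : Fin s → ℝ) :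
    ∃ σ : Equiv.Perm (Fin s), ∑ i, c i * a i ≤ ∑ i, c i * b (σ i) := by
  obtain ⟨ρ, hρ⟩ := exists_perm_antitone_comp c
  obtain ⟨τ, hτ⟩ := exists_perm_antitone_comp b
  have hsorted : Majorizes (a ∘ ρ) (b ∘ τ) := h.comp_perm ρ τ
  refine ⟨ρ.symm.trans τ, ?_⟩
  calc ∑ i, c i * a i
      = ∑ i, c (ρ i) * a (ρ i) := (Equiv.sum_comp ρ fun i => c i * a i).symm
    _ ≤ ∑ i, c (ρ i) * b (τ i) :=
        sum_mul_le_sum_mul_of_antitone hρ (hsorted.sum_Iio_le_sum_Iio hτ) hsorted.2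
    _ = ∑ i, c i * b (ρ.symm.trans τ i) := by
        rw [← Equiv.sum_comp ρ fun i => c i * b (ρ.symm.trans τ i)]
        simp only [Equiv.trans_apply, Equiv.symm_apply_apply]

theorem mem_convexHull_range_comp_perm (h : Majorizes a b) :
    a ∈ convexHull ℝ (Set.range fun σ : Equiv.Perm (Fin s) => b ∘ σ) := by
  by_contra ha
  obtain ⟨φ, u, hφ, hu⟩ := geometric_hahn_banach_closed_point (convex_convexHull ℝ _)
    ((Set.finite_range _).isClosed_convexHull ℝ) ha
  obtain ⟨c, hc⟩ : ∃ c : Fin s → ℝ, ∀ x, φ x = ∑ i, c i * x i :=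
    ⟨fun i => φ fun j => if i = j then 1 else 0, fun x =>
      (φ.toLinearMap.pi_apply_eq_sum_univ x).trans (by simp [mul_comm])⟩
  obtain ⟨σ, hσ⟩ := h.exists_perm_sum_mul_le c
  have hle : φ a ≤ φ (b ∘ σ) := by simpa only [hc, Function.comp_apply] using hσ
  exact ((hφ _ (subset_convexHull ℝ _ ⟨σ, rfl⟩)).trans hu).not_ge hle

end Majorizes

/-- Schur-convexity on `S`: `F` is monotone for majorization between points of `S`.
The set `S` is explicit because the sampling error is only considered on nonnegative powers. -/
def SchurConvexOn {s : ℕ} (S : Set (Fin s → ℝ)) (F : (Fin s → ℝ) → ℝ) : Prop :=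
  ∀ a ∈ S, ∀ b ∈ S, Majorizes a b → F a ≤ F b

namespace SchurConvexOn

variable {s : ℕ}

theorem of_convexOn_of_comp_perm {S : Set (Fin s → ℝ)} {F : (Fin s → ℝ) → ℝ}
    (hF : ConvexOn ℝ S F) (hS : ∀ x ∈ S, ∀ σ : Equiv.Perm (Fin s), x ∘ σ ∈ S)
    (hF_perm : ∀ x ∈ S, ∀ σ : Equiv.Perm (Fin s), F (x ∘ σ) = F x) :
    SchurConvexOn S F := by
  intro a _ b hb h
  obtain ⟨_, ⟨σ, rfl⟩, hle⟩ := hF.exists_ge_of_mem_convexHull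
    (Set.range_subset_iff.mpr (hS b hb)) h.mem_convexHull_range_comp_perm
  exact hle.trans_eq (hF_perm b hb σ)

theorem sum_of_convexOn {I : Set ℝ} {f : ℝ → ℝ} (hf : ConvexOn ℝ I f) :
    SchurConvexOn {x : Fin s → ℝ | ∀ i, x i ∈ I} fun x => ∑ i, f (x i) := by
  refine of_convexOn_of_comp_perm ⟨fun x hx y hy p q hp hq hpq i => hf.1 (hx i) (hy i) hp hq hpq,
    fun x hx y hy p q hp hq hpq => ?_⟩ (fun x hx σ i => hx (σ i))
    fun x _ σ => Equiv.sum_comp σ fun i => f (x i)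
  simp only [smul_sum, ← sum_add_distrib]
  exact sum_le_sum fun i _ => hf.2 (hx i) (hy i) hp hq hpq

theorem isMinOn {S A : Set (Fin s → ℝ)} {F : (Fin s → ℝ) → ℝ} {a : Fin s → ℝ}
    (hF : SchurConvexOn S F) (hA : A ⊆ S) (ha : a ∈ A) (hmaj : ∀ b ∈ A, Majorizes a b) :
    IsMinOn F A a :=
  fun b hb => hF a (hA ha) b (hA hb) (hmaj b hb)

end SchurConvexOn

theorem convexOn_const_div_one_add_mul {C g : ℝ} (hC : 0 ≤ C) (hg : 0 ≤ g) :
    ConvexOn ℝ (Set.Ici 0) fun x => C / (1 + g * x) := by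
  have hinv : ConvexOn ℝ (Set.Ioi 0) fun x : ℝ => x⁻¹ := by
    simpa only [zpow_neg_one] using convexOn_zpow (𝕜 := ℝ) (-1)
  -- `lineMap 1 (1 + g)` is the affine map `x ↦ 1 + g * x`.
  have hcomp := (hinv.comp_affineMap (AffineMap.lineMap (k := ℝ) 1 (1 + g))).smul hC
  refine (hcomp.subset (fun x (hx : 0 ≤ x) => ?_) (convex_Ici 0)).congr fun x _ => ?_
  · have : 0 < 1 + g * x := by positivity
    simpa [AffineMap.lineMap_apply, mul_comm, add_comm] using this
  · simp [AffineMap.lineMap_apply, div_eq_mul_inv, mul_comm, add_comm]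

/-- paper's Lemma 7: for a sampled low-pass c.w.s.s. source over
a static channel, the equidistant-sampling error
`ērr(ā) = Σ_r (P_x/s)/(1 + γ σ_x² ā_r)` (with `σ_x² = P_x/n`, `n = Δ·s`) is
Schur-convex; consequently any allocation `ā*` satisfying the induced energy
causality constraints and majorized by every allocation satisfying them
minimizes `ērr` among all such allocations. -/
theorem stmt14 (Δ s : ℕ) (hΔ : 0 < Δ) (hs : 0 < s) (td : ℕ) (htd : td < Δ)
    (n : ℕ) (hn : n = Δ * s)
    (Px γ : ℝ) (hPx : 0 < Px) (hγ : 0 < γ)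
    (σx2 : ℝ) (hσ : σx2 = Px / n)
    (Ebar : Fin s → ℝ) (hEbar : ∀ r, 0 ≤ Ebar r) :
    (∀ abar bbar : Fin s → ℝ, (∀ r, 0 ≤ abar r) → (∀ r, 0 ≤ bbar r) →
      Majorizes abar bbar →
      ∑ r, (Px / s) / (1 + γ * σx2 * abar r)
        ≤ ∑ r, (Px / s) / (1 + γ * σx2 * bbar r))
    ∧ (∀ astar : Fin s → ℝ, FeasibleBar σx2 Ebar astar →
        (∀ bbar : Fin s → ℝ, FeasibleBar σx2 Ebar bbar → Majorizes astar bbar) →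
        ∀ bbar : Fin s → ℝ, FeasibleBar σx2 Ebar bbar →
          ∑ r, (Px / s) / (1 + γ * σx2 * astar r)
            ≤ ∑ r, (Px / s) / (1 + γ * σx2 * bbar r)) := by
  have hσ_nonneg : 0 ≤ σx2 := by rw [hσ]; positivity
  have hschur : SchurConvexOn {x : Fin s → ℝ | ∀ r, x r ∈ Set.Ici 0}
      fun x => ∑ r, (Px / s) / (1 + γ * σx2 * x r) :=
    .sum_of_convexOn (convexOn_const_div_one_add_mul (by positivity) (by positivity))
  refine ⟨fun a b ha hb => hschur a ha b hb, fun astar hfeas hmaj => ?_⟩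
  exact isMinOn_iff.mp
    (hschur.isMinOn (A := {x | FeasibleBar σx2 Ebar x}) (fun _ hx => hx.1) hfeas hmaj)
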